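/- arXiv:1803.11026 — 2 statements merged into one kernel-verified Lean document; each statement's English description precedes it below -/
import Mathlib

section
/- For every integer N ≥ 2 and every ψ ∈ C_c^∞((ℝ³)^N; ℂ) the quadratic form inequality holds: ∫ 1_{{|z₁ − z₂| < R_β}} |∇_{z₁} ψ|² dz + ½ ∫ (w_μ − U_β)(z₁ − z₂) |ψ(z)|² dz ≥ 0. -/
open Set MeasureTheory

/-- The radial scattering data: the rescaled interaction `w_μ(r) = μ⁻² w(r/μ)` (given through its
radial profile `w`), its zero-energy scattering solution `j̃` in radial form, and for each `κ ≥ 1`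
the function `f̃_κ` which equals `κ j̃` on `[0, μ^β̃]` and solves
`f̃_κ'' = -½ a μ^(1-3β̃) f̃_κ` beyond `μ^β̃`. -/
structure ScatteringODE where
  a : ℝ
  beta : ℝ
  mu : ℝ
  w : ℝ → ℝ
  jt : ℝ → ℝ
  jt' : ℝ → ℝ
  ft : ℝ → ℝ → ℝ
  ft' : ℝ → ℝ → ℝ
  ha : 0 < a
  hbeta : beta ∈ Set.Ioo (1/3 : ℝ) 1
  hmu : mu ∈ Set.Ioo (0 : ℝ) 1
  hw_nonneg : ∀ r, 0 ≤ w r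
  hw_bdd : ∃ M, ∀ r, w r ≤ M
  hw_supp : ∀ r, 1 < r → w r = 0
  hjt_deriv : ∀ r, HasDerivAt jt (jt' r) r
  hjt_zero : jt 0 = 0
  hjt_ode : ∀ r ∈ Set.Ioo 0 mu, HasDerivAt jt' ((1/2) * (mu⁻¹ ^ 2 * w (r / mu)) * jt r) r
  hjt_lin : ∀ r, mu ≤ r → jt r = r - mu * a
  hjt_nonneg : ∀ r, 0 ≤ r → 0 ≤ jt r
  hjt_mono : MonotoneOn jt (Set.Ici 0)
  hjt_le : ∀ r, 0 ≤ r → jt r ≤ r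
  hft_deriv : ∀ κ r : ℝ, HasDerivAt (ft κ) (ft' κ r) r
  hft_eq : ∀ κ : ℝ, ∀ r ∈ Set.Icc (0:ℝ) (mu ^ beta), ft κ r = κ * jt r
  hft_ode : ∀ κ r : ℝ, mu ^ beta < r →
      HasDerivAt (ft' κ) (-(1/2) * a * mu ^ (1 - 3 * beta) * ft κ r) r

/-- A scattering setup together with the tangency parameter `κ_β ∈ (1, μ^β̃/(μ^β̃ - μa))` and the
minimal tangency radius `R_β ∈ (μ^β̃, ∞)` at which `f̃_{κ_β}` is tangent to the line `r ↦ r`. -/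
structure TangentScattering extends ScatteringODE where
  hsmall : mu * a < mu ^ beta
  kappa : ℝ
  Rb : ℝ
  hkappa : kappa ∈ Set.Ioo 1 (mu ^ beta / (mu ^ beta - mu * a))
  hRb : mu ^ beta < Rb
  htan_val : ft kappa Rb = Rb
  htan_der : ft' kappa Rb = 1
  hRb_min : ∀ R : ℝ, mu ^ beta < R → ft kappa R = R → ft' kappa R = 1 → Rb ≤ R

/-- The radial form `f̃` of the scattering solution `f_β`, extended by `f̃(r) = r` for `r ≥ R_β`. -/
noncomputable def TangentScattering.fext (S : TangentScattering) (r : ℝ) : ℝ :=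
  if r < S.Rb then S.ft S.kappa r else r

/-- The scaled interaction `w_μ(z) = μ⁻² w(|z|/μ)` as a function on `ℝ³`. -/
noncomputable def ScatteringODE.wmu3 (S : ScatteringODE)
    (z : EuclideanSpace ℝ (Fin 3)) : ℝ :=
  S.mu⁻¹ ^ 2 * S.w (‖z‖ / S.mu)

/-- The auxiliary potential `U_β(z) = a μ^(1-3β̃)` for `μ^β̃ < |z| < R_β` and `0` otherwise. -/
noncomputable def TangentScattering.Ub (S : TangentScattering)
    (z : EuclideanSpace ℝ (Fin 3)) : ℝ :=
  if S.mu ^ S.beta < ‖z‖ ∧ ‖z‖ < S.Rb then S.a * S.mu ^ (1 - 3 * S.beta) else 0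


open Filter Topology

/-- If the derivative `g'` of `g` itself has a bounded derivative on `(α, β)`, then `g'` is
continuous up to the endpoints. -/
lemma continuousOn_Icc_of_hasDerivAt_of_abs_le {g g' g'' : ℝ → ℝ} {α β K : ℝ} (hαβ : α < β)
    (hg : ∀ r, HasDerivAt g (g' r) r) (hg' : ∀ r ∈ Ioo α β, HasDerivAt g' (g'' r) r)
    (hK : ∀ r ∈ Ioo α β, |g'' r| ≤ K) : ContinuousOn g' (Icc α β) := by
  have hlip : LipschitzOnWith K.toNNReal g' (Ioo α β) := by
    refine (convex_Ioo α β).lipschitzOnWith_of_nnnorm_hasDerivWithin_le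
      (fun x hx => (hg' x hx).hasDerivWithinAt) fun x hx => ?_
    rw [← NNReal.coe_le_coe, coe_nnnorm, Real.norm_eq_abs]
    exact (hK x hx).trans (Real.le_coe_toNNReal K)
  obtain ⟨h, hhlip, hh⟩ := hlip.extend_real
  have hderiv : deriv g = g' := funext fun r => (hg r).deriv
  have hdiff : Differentiable ℝ g := fun r => (hg r).differentiableAt
  have hleft : g' α = h α := by
    have hmem : Ioo α β ∈ 𝓝[>] α := Ioo_mem_nhdsGT hαβ
    have ht : Tendsto (deriv g) (𝓝[>] α) (𝓝 (h α)) := by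
      rw [hderiv]
      refine (hhlip.continuous.continuousAt.tendsto.mono_left nhdsWithin_le_nhds).congr' ?_
      filter_upwards [hmem] with x hx using (hh hx).symm
    exact (uniqueDiffWithinAt_Ici α).eq_deriv _ (hg α).hasDerivWithinAt
      (hasDerivWithinAt_Ici_of_tendsto_deriv hdiff.differentiableOn
        hdiff.continuous.continuousWithinAt hmem ht)
  have hright : g' β = h β := by
    have hmem : Ioo α β ∈ 𝓝[<] β := Ioo_mem_nhdsLT hαβ
    have ht : Tendsto (deriv g) (𝓝[<] β) (𝓝 (h β)) := by
      rw [hderiv]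
      refine (hhlip.continuous.continuousAt.tendsto.mono_left nhdsWithin_le_nhds).congr' ?_
      filter_upwards [hmem] with x hx using (hh hx).symm
    exact (uniqueDiffWithinAt_Iic β).eq_deriv _ (hg β).hasDerivWithinAt
      (hasDerivWithinAt_Iic_of_tendsto_deriv hdiff.differentiableOn
        hdiff.continuous.continuousWithinAt hmem ht)
  refine hhlip.continuous.continuousOn.congr fun x hx => ?_
  rcases eq_or_lt_of_le hx.1 with rfl | h1
  · exact hleft
  rcases eq_or_lt_of_le hx.2 with rfl | h2
  · exact hright
  exact hh ⟨h1, h2⟩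

/-- Radial positivity by the ground state substitution: if `f` is a positive supersolution of
`f'' = ½ W f` on `(0, R)` which is tangent to the identity at `R`, then any integrable majorant of
the radial energy density `r² (|u'|² + ½ W |u|²)` has non-negative integral over `(0, R)`. -/
lemma integral_radial_energy_nonneg {f f' D W φ : ℝ → ℝ} {u u' : ℝ → ℂ} {R c : ℝ} (hR : 0 < R)
    (hc : 0 < c) (hf : ∀ r, HasDerivAt f (f' r) r) (hfc : ∀ r ∈ Icc 0 R, c * r ≤ f r)
    (hf'c : ContinuousOn f' (Icc 0 R))
    (hf' : ∀ r ∈ Ioo 0 R, HasDerivWithinAt f' (D r) (Ioi r) r)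
    (hD : ∀ r ∈ Ioo 0 R, D r ≤ 1 / 2 * W r * f r) (hfR : f R = R) (hf'R : f' R = 1)
    (hu : ∀ r, HasDerivAt u (u' r) r) (hφ : IntegrableOn φ (Icc 0 R))
    (hle : ∀ r ∈ Ioo 0 R, r ^ 2 * (‖u' r‖ ^ 2 + 1 / 2 * W r * ‖u r‖ ^ 2) ≤ φ r) :
    0 ≤ ∫ r in (0)..R, φ r := by
  have hfpos : ∀ r ∈ Ioc 0 R, 0 < f r := fun r hr =>
    (mul_pos hc hr.1).trans_le (hfc r ⟨hr.1.le, hr.2⟩)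
  have hfcont : Continuous f := continuous_iff_continuousAt.2 fun r => (hf r).continuousAt
  have hucont : Continuous u := continuous_iff_continuousAt.2 fun r => (hu r).continuousAt
  set q : ℝ → ℝ := fun r => r ^ 2 * f' r / f r - r with hq
  have hqc : ContinuousOn q (Icc 0 R) := by
    intro r hr
    rcases eq_or_lt_of_le hr.1 with rfl | h0
    · obtain ⟨C, hC⟩ := isCompact_Icc.exists_bound_of_continuousOn hf'c
      have hlim : Tendsto (fun r : ℝ => C / c * r + r) (𝓝[Icc 0 R] 0) (𝓝 0) := by
        have : Continuous fun r : ℝ => C / c * r + r := by fun_prop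
        simpa using this.continuousAt.tendsto.mono_left (nhdsWithin_le_nhds (a := (0 : ℝ)))
      have h00 : q 0 = 0 := by simp [hq]
      rw [ContinuousWithinAt, h00]
      refine squeeze_zero_norm' ?_ hlim
      filter_upwards [self_mem_nhdsWithin] with r hr
      rcases eq_or_lt_of_le hr.1 with rfl | h0
      · simp [hq]
      have hfr := hfpos r ⟨h0, hr.2⟩
      have hb : ‖r ^ 2 * f' r / f r‖ ≤ C / c * r := by
        rw [norm_div, norm_mul, Real.norm_of_nonneg hfr.le, Real.norm_of_nonneg (sq_nonneg r),
          div_le_iff₀ hfr]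
        have hC0 : 0 ≤ C := (norm_nonneg _).trans (hC r hr)
        calc r ^ 2 * ‖f' r‖ ≤ r ^ 2 * C := by gcongr; exact hC r hr
          _ = C / c * r * (c * r) := by field_simp
          _ ≤ C / c * r * f r := by gcongr; exact hfc r hr
      calc ‖q r‖ ≤ ‖r ^ 2 * f' r / f r‖ + ‖r‖ := norm_sub_le _ _
        _ ≤ C / c * r + r := by rw [Real.norm_of_nonneg h0.le]; gcongr
    · have hfr := hfpos r ⟨h0, hr.2⟩
      exact (((continuousWithinAt_id.pow 2).mul (hf'c r hr)).div hfcont.continuousWithinAt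
        hfr.ne').sub continuousWithinAt_id
  have hG := intervalIntegral.sub_le_integral_of_hasDeriv_right_of_le (a := 0) (b := R)
    (g := fun r => q r * ‖u r‖ ^ 2) (φ := φ)
    (g' := fun r => (((2 * r * f' r + r ^ 2 * D r) * f r - r ^ 2 * f' r * f' r) / f r ^ 2 - 1)
      * ‖u r‖ ^ 2 + q r * (2 * inner ℝ (u r) (u' r))) hR.le
    (hqc.mul (hucont.norm.pow 2).continuousOn) ?_ hφ ?_
  · simpa [hq, hfR, hf'R, sq, hR.ne'] using hG
  · intro r hr
    have hfr := hfpos r ⟨hr.1, hr.2.le⟩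
    have h1 : HasDerivWithinAt (fun r : ℝ => r ^ 2) (2 * r) (Ioi r) r := by
      simpa using (hasDerivAt_pow 2 r).hasDerivWithinAt
    exact (((h1.mul (hf' r hr)).div (hf r).hasDerivWithinAt hfr.ne').sub
      (hasDerivWithinAt_id _ _)).mul (hu r).norm_sq.hasDerivWithinAt
  · intro r hr
    refine le_trans ?_ (hle r hr)
    have hfr := hfpos r ⟨hr.1, hr.2.le⟩
    have hr0 := hr.1
    have hDr : D r / f r ≤ 1 / 2 * W r := by rw [div_le_iff₀ hfr]; exact hD r hr
    obtain ⟨η, hη⟩ : ∃ η, η = f' r / f r - 1 / r := ⟨_, rfl⟩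
    have hf'r : f' r = (η + 1 / r) * f r := by rw [hη]; field_simp; ring
    have hqr : q r = r ^ 2 * η := by simp only [hq]; rw [hf'r]; field_simp; ring
    have hcoef : ((2 * r * f' r + r ^ 2 * D r) * f r - r ^ 2 * f' r * f' r) / f r ^ 2 - 1
        = r ^ 2 * (D r / f r) - r ^ 2 * η ^ 2 := by
      rw [hf'r]; field_simp; ring
    have hin : η * inner ℝ (u r) (u' r) ≤ |η| * (‖u r‖ * ‖u' r‖) := by
      refine (le_abs_self _).trans ?_
      rw [abs_mul]
      gcongr
      exact abs_real_inner_le_norm _ _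
    have key : (D r / f r - η ^ 2) * ‖u r‖ ^ 2 + 2 * (η * inner ℝ (u r) (u' r))
        ≤ ‖u' r‖ ^ 2 + 1 / 2 * W r * ‖u r‖ ^ 2 := by
      have h2 := mul_le_mul_of_nonneg_right hDr (sq_nonneg ‖u r‖)
      have h3 := sq_nonneg (|η| * ‖u r‖ - ‖u' r‖)
      have h4 := sq_abs η
      nlinarith
    rw [hcoef, hqr]
    calc _ = r ^ 2 * ((D r / f r - η ^ 2) * ‖u r‖ ^ 2 + 2 * (η * inner ℝ (u r) (u' r))) := by ring
      _ ≤ _ := by gcongr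

namespace ScatteringODE

variable (S : ScatteringODE)

lemma mu_lt_rpow_beta : S.mu < S.mu ^ S.beta := by
  simpa using Real.rpow_lt_rpow_of_exponent_gt S.hmu.1 S.hmu.2 S.hbeta.2

lemma ft'_eq_of_mem_Ioo (κ : ℝ) {r : ℝ} (hr : r ∈ Ioo 0 (S.mu ^ S.beta)) :
    S.ft' κ r = κ * S.jt' r := by
  have h : S.ft κ =ᶠ[𝓝 r] fun s => κ * S.jt s := by
    filter_upwards [Ioo_mem_nhds hr.1 hr.2] with s hs using S.hft_eq κ s ⟨hs.1.le, hs.2.le⟩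
  exact (S.hft_deriv κ r).unique (((S.hjt_deriv r).const_mul κ).congr_of_eventuallyEq h)

lemma hasDerivAt_ft'_of_mem_Ioo (κ : ℝ) {r : ℝ} (hr : r ∈ Ioo 0 S.mu) :
    HasDerivAt (S.ft' κ) (1 / 2 * (S.mu⁻¹ ^ 2 * S.w (r / S.mu)) * S.ft κ r) r := by
  have hb := S.mu_lt_rpow_beta
  have h : S.ft' κ =ᶠ[𝓝 r] fun s => κ * S.jt' s := by
    filter_upwards [Ioo_mem_nhds hr.1 hr.2] with s hs
      using S.ft'_eq_of_mem_Ioo κ ⟨hs.1, hs.2.trans hb⟩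
  refine (((S.hjt_ode r hr).const_mul κ).congr_of_eventuallyEq h).congr_deriv ?_
  rw [S.hft_eq κ r ⟨hr.1.le, (hr.2.trans hb).le⟩]
  ring

lemma ft_eq_of_mem_Icc (κ : ℝ) {r : ℝ} (hr : r ∈ Icc S.mu (S.mu ^ S.beta)) :
    S.ft κ r = κ * (r - S.mu * S.a) := by
  rw [S.hft_eq κ r ⟨S.hmu.1.le.trans hr.1, hr.2⟩, S.hjt_lin r hr.1]

lemma ft'_eq_of_mem_Icc (κ : ℝ) {r : ℝ} (hr : r ∈ Icc S.mu (S.mu ^ S.beta)) :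
    S.ft' κ r = κ := by
  have h : HasDerivWithinAt (S.ft κ) κ (Icc S.mu (S.mu ^ S.beta)) r := by
    have h' : HasDerivAt (fun s => κ * (s - S.mu * S.a)) κ r := by
      simpa using ((hasDerivAt_id r).sub_const (S.mu * S.a)).const_mul κ
    exact h'.hasDerivWithinAt.congr (fun s hs => S.ft_eq_of_mem_Icc κ hs) (S.ft_eq_of_mem_Icc κ hr)
  exact (uniqueDiffOn_Icc S.mu_lt_rpow_beta r hr).eq_deriv _
    (S.hft_deriv κ r).hasDerivWithinAt h

lemma continuous_ft (κ : ℝ) : Continuous (S.ft κ) :=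
  continuous_iff_continuousAt.2 fun r => (S.hft_deriv κ r).continuousAt

lemma ft_zero (κ : ℝ) : S.ft κ 0 = 0 := by
  rw [S.hft_eq κ 0 ⟨le_rfl, (Real.rpow_pos_of_pos S.hmu.1 _).le⟩, S.hjt_zero, mul_zero]

lemma ft_nonneg {κ r : ℝ} (hκ : 0 ≤ κ) (hr : r ∈ Icc 0 (S.mu ^ S.beta)) : 0 ≤ S.ft κ r := by
  rw [S.hft_eq κ r hr]
  exact mul_nonneg hκ (S.hjt_nonneg r hr.1)

lemma continuousOn_ft'_Icc_zero_mu (κ : ℝ) : ContinuousOn (S.ft' κ) (Icc 0 S.mu) := by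
  obtain ⟨M, hM⟩ := S.hw_bdd
  obtain ⟨C, hC⟩ := (isCompact_Icc (a := 0) (b := S.mu)).exists_bound_of_continuousOn
    (S.continuous_ft κ).continuousOn
  refine continuousOn_Icc_of_hasDerivAt_of_abs_le (K := 1 / 2 * (S.mu⁻¹ ^ 2 * M) * C) S.hmu.1
    (S.hft_deriv κ) (fun r hr => S.hasDerivAt_ft'_of_mem_Ioo κ hr) fun r hr => ?_
  have h1 := S.hw_nonneg (r / S.mu)
  have h2 := hM (r / S.mu)
  have h3 : |S.ft κ r| ≤ C := hC r ⟨hr.1.le, hr.2.le⟩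
  have h4 : 0 ≤ M := h1.trans h2
  rw [abs_mul, abs_of_nonneg (by positivity : 0 ≤ 1 / 2 * (S.mu⁻¹ ^ 2 * S.w (r / S.mu)))]
  gcongr

lemma continuousOn_ft'_outer (κ : ℝ) {R : ℝ} (hR : S.mu ^ S.beta < R) :
    ContinuousOn (S.ft' κ) (Icc (S.mu ^ S.beta) R) := by
  obtain ⟨C, hC⟩ := (isCompact_Icc (a := S.mu ^ S.beta) (b := R)).exists_bound_of_continuousOn
    (f := fun r => -(1 / 2) * S.a * S.mu ^ (1 - 3 * S.beta) * S.ft κ r)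
    (continuous_const.mul (S.continuous_ft κ)).continuousOn
  exact continuousOn_Icc_of_hasDerivAt_of_abs_le hR
    (S.hft_deriv κ) (fun r hr => S.hft_ode κ r hr.1) fun r hr => hC r ⟨hr.1.le, hr.2.le⟩

lemma continuousOn_ft' (κ : ℝ) {R : ℝ} (hR : S.mu ^ S.beta < R) :
    ContinuousOn (S.ft' κ) (Icc 0 R) := by
  have hb := S.mu_lt_rpow_beta
  have h1 : ContinuousOn (S.ft' κ) (Icc S.mu (S.mu ^ S.beta)) :=
    continuousOn_const.congr fun r hr => S.ft'_eq_of_mem_Icc κ hr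
  rw [← Icc_union_Icc_eq_Icc (S.hmu.1.le.trans hb.le) hR.le,
    ← Icc_union_Icc_eq_Icc S.hmu.1.le hb.le]
  exact ((S.continuousOn_ft'_Icc_zero_mu κ).union_of_isClosed h1 isClosed_Icc
    isClosed_Icc).union_of_isClosed (S.continuousOn_ft'_outer κ hR)
    (isClosed_Icc.union isClosed_Icc) isClosed_Icc

/-- The scattering solution leaves the origin with positive slope: otherwise uniqueness for the
second order equation would force it to vanish on `[0, μ]`. -/
lemma ft'_zero_pos {κ : ℝ} (hκ : 0 < κ) : 0 < S.ft' κ 0 := by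
  have hb := S.mu_lt_rpow_beta
  have hnonneg : 0 ≤ S.ft' κ 0 := by
    have hlim := (hasDerivWithinAt_iff_tendsto_slope' (by simp : (0 : ℝ) ∉ Ioi 0)).1
      (S.hft_deriv κ 0).hasDerivWithinAt
    refine ge_of_tendsto hlim ?_
    filter_upwards [Ioo_mem_nhdsGT S.hmu.1] with r hr
    rw [slope_def_field, S.ft_zero, sub_zero, sub_zero]
    exact div_nonneg (S.ft_nonneg hκ.le ⟨hr.1.le, (hr.2.trans hb).le⟩) hr.1.le
  obtain ⟨M, hM⟩ := S.hw_bdd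
  set L := 1 + 1 / 2 * (S.mu⁻¹ ^ 2 * M) with hL
  have hanti : AntitoneOn (fun r => (S.ft' κ r ^ 2 + S.ft κ r ^ 2) * Real.exp (-L * r))
      (Icc 0 S.mu) := by
    have hd : ∀ r ∈ Ioo 0 S.mu,
        HasDerivAt (fun r => (S.ft' κ r ^ 2 + S.ft κ r ^ 2) * Real.exp (-L * r))
          ((2 * S.ft' κ r * (1 / 2 * (S.mu⁻¹ ^ 2 * S.w (r / S.mu)) * S.ft κ r)
            + 2 * S.ft κ r * S.ft' κ r) * Real.exp (-L * r)
            + (S.ft' κ r ^ 2 + S.ft κ r ^ 2) * (Real.exp (-L * r) * (-L))) r := by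
      intro r hr
      have h1 := (S.hasDerivAt_ft'_of_mem_Ioo κ hr).fun_pow 2
      have h2 := (S.hft_deriv κ r).fun_pow 2
      have h3 : HasDerivAt (fun r => Real.exp (-L * r)) (Real.exp (-L * r) * (-L)) r := by
        simpa using ((hasDerivAt_id r).const_mul (-L)).exp
      refine ((h1.add h2).mul h3).congr_deriv ?_
      simp
    refine antitoneOn_of_deriv_nonpos (convex_Icc _ _) ?_ ?_ ?_
    · exact (((S.continuousOn_ft'_Icc_zero_mu κ).pow 2).add
        ((S.continuous_ft κ).continuousOn.pow 2)).mul (by fun_prop)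
    · rw [interior_Icc]
      exact fun r hr => (hd r hr).differentiableAt.differentiableWithinAt
    · rw [interior_Icc]
      intro r hr
      rw [(hd r hr).deriv]
      have hv0 : 0 ≤ 1 / 2 * (S.mu⁻¹ ^ 2 * S.w (r / S.mu)) := by
        have := S.hw_nonneg (r / S.mu); positivity
      have hvM : 1 + 1 / 2 * (S.mu⁻¹ ^ 2 * S.w (r / S.mu)) ≤ L := by
        rw [hL]; gcongr; exact hM _
      generalize 1 / 2 * (S.mu⁻¹ ^ 2 * S.w (r / S.mu)) = v at hv0 hvM
      have hE := Real.exp_pos (-L * r)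
      have h5 : 2 * S.ft' κ r * (v * S.ft κ r) + 2 * S.ft κ r * S.ft' κ r
          - (S.ft' κ r ^ 2 + S.ft κ r ^ 2) * L ≤ 0 := by
        nlinarith [mul_nonneg (by linarith : 0 ≤ 1 + v) (sq_nonneg (S.ft' κ r - S.ft κ r)),
          mul_nonneg (sub_nonneg.2 hvM) (add_nonneg (sq_nonneg (S.ft' κ r)) (sq_nonneg (S.ft κ r)))]
      nlinarith [mul_nonneg hE.le (neg_nonneg.2 h5)]
  have h := hanti (left_mem_Icc.2 S.hmu.1.le) (right_mem_Icc.2 S.hmu.1.le) S.hmu.1.le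
  simp only [S.ft_zero, S.ft'_eq_of_mem_Icc κ (left_mem_Icc.2 hb.le), mul_zero, Real.exp_zero,
    mul_one] at h
  have hpos : 0 < (κ ^ 2 + S.ft κ S.mu ^ 2) * Real.exp (-L * S.mu) := by positivity
  refine lt_of_le_of_ne hnonneg fun h0 => ?_
  rw [← h0] at h
  norm_num at h
  norm_num at hpos
  linarith

lemma ft'_zero_le {κ r : ℝ} (hκ : 0 ≤ κ) (hr : r ∈ Icc 0 S.mu) : S.ft' κ 0 ≤ S.ft' κ r := by
  have hmono : MonotoneOn (S.ft' κ) (Icc 0 S.mu) := by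
    refine monotoneOn_of_deriv_nonneg (convex_Icc _ _) (S.continuousOn_ft'_Icc_zero_mu κ) ?_ ?_
    · rw [interior_Icc]
      exact fun r hr =>
        (S.hasDerivAt_ft'_of_mem_Ioo κ hr).differentiableAt.differentiableWithinAt
    · rw [interior_Icc]
      intro r hr
      rw [(S.hasDerivAt_ft'_of_mem_Ioo κ hr).deriv]
      have h1 := S.hw_nonneg (r / S.mu)
      have h2 := S.ft_nonneg hκ ⟨hr.1.le, (hr.2.trans S.mu_lt_rpow_beta).le⟩
      positivity
  exact hmono (left_mem_Icc.2 S.hmu.1.le) hr hr.1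

/-- Conservation of the oscillator energy beyond `μ^β̃`. -/
lemma energy_eq (κ : ℝ) {r : ℝ} (hr : S.mu ^ S.beta < r) :
    S.ft' κ r ^ 2 + 1 / 2 * S.a * S.mu ^ (1 - 3 * S.beta) * S.ft κ r ^ 2 =
      κ ^ 2 + 1 / 2 * S.a * S.mu ^ (1 - 3 * S.beta) *
        (κ * (S.mu ^ S.beta - S.mu * S.a)) ^ 2 := by
  have hbm := right_mem_Icc.2 S.mu_lt_rpow_beta.le
  set q := 1 / 2 * S.a * S.mu ^ (1 - 3 * S.beta) with hq
  obtain ⟨ξ, hξ, h⟩ := exists_hasDerivAt_eq_slope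
    (fun r => S.ft' κ r ^ 2 + q * S.ft κ r ^ 2) (fun _ => 0) hr
    (((S.continuousOn_ft'_outer κ hr).pow 2).add
      (continuousOn_const.mul ((S.continuous_ft κ).continuousOn.pow 2))) fun s hs => by
      refine (((S.hft_ode κ s hs.1).fun_pow 2).add
        (((S.hft_deriv κ s).fun_pow 2).const_mul q)).congr_deriv ?_
      rw [hq]
      norm_num
      ring
  rw [eq_div_iff (sub_pos.2 hr).ne', zero_mul] at h
  simp only [S.ft'_eq_of_mem_Icc κ hbm, S.ft_eq_of_mem_Icc κ hbm] at h
  linarith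

end ScatteringODE

namespace TangentScattering

variable (S : TangentScattering)

/-- For small `μ` the tangency radius is small on the scale of the oscillation length. -/
lemma oscillation_Rb_le (hμ : S.a * S.mu ^ (1 - S.beta) ≤ 1 / 20) :
    1 / 2 * S.a * S.mu ^ (1 - 3 * S.beta) * S.Rb ^ 2 ≤ 1 / 4 := by
  have hmu := S.hmu.1
  have hE := S.energy_eq S.kappa S.hRb
  rw [S.htan_val, S.htan_der] at hE
  have hb : 0 < S.mu ^ S.beta := Real.rpow_pos_of_pos hmu _
  set b := S.mu ^ S.beta with hbdef
  set x := S.a * S.mu ^ (1 - S.beta) with hx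
  have hx0 : 0 < x := mul_pos S.ha (Real.rpow_pos_of_pos hmu _)
  have hmua : S.mu * S.a = x * b := by
    rw [hx, hbdef, mul_assoc, ← Real.rpow_add hmu]
    simp [mul_comm]
  have hqb : 1 / 2 * S.a * S.mu ^ (1 - 3 * S.beta) * b ^ 2 = x / 2 := by
    rw [hx, hbdef, ← Real.rpow_natCast, ← Real.rpow_mul hmu.le, mul_assoc, ← Real.rpow_add hmu]
    rw [show 1 - 3 * S.beta + S.beta * ((2 : ℕ) : ℝ) = 1 - S.beta by push_cast; ring]
    ring
  have hκ1 := S.hkappa.1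
  have hκ := S.hkappa.2
  rw [← hbdef, hmua, lt_div_iff₀ (by nlinarith)] at hκ
  have hκx : S.kappa * (1 - x) < 1 := by
    by_contra! h
    nlinarith [mul_le_mul_of_nonneg_right h hb.le]
  have h2 : 1 / 2 * S.a * S.mu ^ (1 - 3 * S.beta) * (S.kappa * (b - S.mu * S.a)) ^ 2
      = x / 2 * (S.kappa * (1 - x)) ^ 2 := by
    rw [hmua, ← hqb]; ring
  rw [h2] at hE
  have hκle : S.kappa ≤ 20 / 19 := by nlinarith
  have h0 : 0 ≤ S.kappa * (1 - x) := mul_nonneg (by linarith) (by linarith)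
  have h3 : (S.kappa * (1 - x)) ^ 2 ≤ 1 := by nlinarith
  nlinarith

lemma one_third_le_ft' (hμ : S.a * S.mu ^ (1 - S.beta) ≤ 1 / 20) {r : ℝ}
    (hr : r ∈ Icc (S.mu ^ S.beta) S.Rb) : 1 / 3 ≤ S.ft' S.kappa r := by
  have hbm := right_mem_Icc.2 S.mu_lt_rpow_beta.le
  have hκ := S.hkappa.1
  have hb : 0 < S.mu ^ S.beta := Real.rpow_pos_of_pos S.hmu.1 _
  rcases eq_or_lt_of_le hr.1 with h | h
  · rw [← h, S.ft'_eq_of_mem_Icc _ hbm]; linarith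
  obtain ⟨ξ, hξ, hs⟩ := exists_hasDerivAt_eq_slope (S.ft' S.kappa) _ h
    (S.continuousOn_ft'_outer _ h) fun s hs => S.hft_ode S.kappa s hs.1
  rw [eq_div_iff (sub_pos.2 h).ne', S.ft'_eq_of_mem_Icc _ hbm] at hs
  have hosc := S.oscillation_Rb_le hμ
  have hE1 := S.energy_eq S.kappa S.hRb
  have hE2 := S.energy_eq S.kappa hξ.1
  rw [S.htan_val, S.htan_der] at hE1
  have hq : 0 < 1 / 2 * S.a * S.mu ^ (1 - 3 * S.beta) := by
    have := S.ha
    have := Real.rpow_pos_of_pos S.hmu.1 (1 - 3 * S.beta)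
    positivity
  have hs' : 1 / 2 * S.a * S.mu ^ (1 - 3 * S.beta) * S.ft S.kappa ξ * (r - S.mu ^ S.beta)
      = S.kappa - S.ft' S.kappa r := by linarith
  generalize 1 / 2 * S.a * S.mu ^ (1 - 3 * S.beta) = q at *
  have hlen : (r - S.mu ^ S.beta) ^ 2 ≤ S.Rb ^ 2 := by
    have := hr.2
    gcongr
    linarith
  have hqf : q * S.ft S.kappa ξ ^ 2 ≤ 5 / 4 := by nlinarith [sq_nonneg (S.ft' S.kappa ξ)]
  have hsq : (S.kappa - S.ft' S.kappa r) ^ 2 ≤ 5 / 16 := by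
    rw [← hs']
    calc (q * S.ft S.kappa ξ * (r - S.mu ^ S.beta)) ^ 2
        = (q * S.ft S.kappa ξ ^ 2) * (q * (r - S.mu ^ S.beta) ^ 2) := by ring
      _ ≤ 5 / 4 * (q * S.Rb ^ 2) := by gcongr
      _ ≤ 5 / 4 * (1 / 4) := by gcongr
      _ = 5 / 16 := by norm_num
  nlinarith

lemma Rb_pos : 0 < S.Rb := (Real.rpow_pos_of_pos S.hmu.1 _).trans S.hRb

lemma exists_pos_mul_le_ft (hμ : S.a * S.mu ^ (1 - S.beta) ≤ 1 / 20) :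
    ∃ c > 0, ∀ r ∈ Icc 0 S.Rb, c * r ≤ S.ft S.kappa r := by
  have hκ := S.hkappa.1
  have h0 := S.ft'_zero_pos (zero_lt_one.trans hκ)
  refine ⟨min (S.ft' S.kappa 0) (1 / 3), lt_min h0 (by norm_num), fun r hr => ?_⟩
  have h := (convex_Icc 0 S.Rb).mul_sub_le_image_sub_of_le_deriv
    (C := min (S.ft' S.kappa 0) (1 / 3)) (S.continuous_ft S.kappa).continuousOn
    (fun s _ => (S.hft_deriv S.kappa s).differentiableAt.differentiableWithinAt) (fun s hs => ?_)
    0 (left_mem_Icc.2 S.Rb_pos.le) r hr hr.1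
  · simpa [S.ft_zero] using h
  · rw [interior_Icc] at hs
    rw [(S.hft_deriv S.kappa s).deriv]
    rcases le_total s S.mu with h1 | h1
    · exact (min_le_left _ _).trans (S.ft'_zero_le (by linarith) ⟨hs.1.le, h1⟩)
    rcases le_total s (S.mu ^ S.beta) with h2 | h2
    · rw [S.ft'_eq_of_mem_Icc _ ⟨h1, h2⟩]
      exact (min_le_right _ _).trans (by linarith)
    · exact (min_le_right _ _).trans (S.one_third_le_ft' hμ ⟨h2, hs.2.le⟩)

/-- The radial profile of `w_μ - U_β`. -/
noncomputable def radialPotential (r : ℝ) : ℝ :=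
  S.mu⁻¹ ^ 2 * S.w (r / S.mu) -
    if S.mu ^ S.beta < r ∧ r < S.Rb then S.a * S.mu ^ (1 - 3 * S.beta) else 0

lemma wmu3_sub_Ub (z : EuclideanSpace ℝ (Fin 3)) :
    S.wmu3 z - S.Ub z = S.radialPotential ‖z‖ := rfl

lemma hasDerivWithinAt_ft'_rpow_beta :
    HasDerivWithinAt (S.ft' S.kappa)
      (-(1 / 2) * S.a * S.mu ^ (1 - 3 * S.beta) * S.ft S.kappa (S.mu ^ S.beta))
      (Ioi (S.mu ^ S.beta)) (S.mu ^ S.beta) := by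
  have hmem : Ioo (S.mu ^ S.beta) S.Rb ∈ 𝓝[>] (S.mu ^ S.beta) := Ioo_mem_nhdsGT S.hRb
  refine (hasDerivWithinAt_Ici_of_tendsto_deriv (s := Ioo (S.mu ^ S.beta) S.Rb)
    (fun r hr => (S.hft_ode _ r hr.1).differentiableAt.differentiableWithinAt) ?_ hmem ?_).mono
    Ioi_subset_Ici_self
  · exact (S.continuousOn_ft'_outer _ S.hRb _ (left_mem_Icc.2 S.hRb.le)).mono Ioo_subset_Icc_self
  · have hc : Continuous fun r => -(1 / 2) * S.a * S.mu ^ (1 - 3 * S.beta) * S.ft S.kappa r :=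
      continuous_const.mul (S.continuous_ft _)
    refine (hc.continuousAt.tendsto.mono_left nhdsWithin_le_nhds).congr' ?_
    filter_upwards [hmem] with r hr using (S.hft_ode _ r hr.1).deriv.symm

/-- The function `f̃` is a supersolution for the potential `½ (w_μ - U_β)`. -/
lemma exists_hasDerivWithinAt_ft'_le {r : ℝ} (hr : r ∈ Ioo 0 S.Rb) :
    ∃ D, HasDerivWithinAt (S.ft' S.kappa) D (Ioi r) r ∧
      D ≤ 1 / 2 * S.radialPotential r * S.ft S.kappa r := by
  have hκ : 0 ≤ S.kappa := zero_le_one.trans S.hkappa.1.le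
  have hb := S.mu_lt_rpow_beta
  have hw : 0 ≤ S.mu⁻¹ ^ 2 * S.w (r / S.mu) := mul_nonneg (sq_nonneg _) (S.hw_nonneg _)
  rcases lt_or_ge r S.mu with h1 | h1
  · refine ⟨_, (S.hasDerivAt_ft'_of_mem_Ioo S.kappa ⟨hr.1, h1⟩).hasDerivWithinAt, ?_⟩
    simp [radialPotential, (h1.trans hb).not_gt]
  rcases lt_trichotomy r (S.mu ^ S.beta) with h2 | h2 | h2
  · refine ⟨0, ?_, ?_⟩
    · refine ((hasDerivWithinAt_const r (Ioi r) S.kappa).congr_of_eventuallyEq ?_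
        (S.ft'_eq_of_mem_Icc _ ⟨h1, h2.le⟩))
      filter_upwards [Ioo_mem_nhdsGT h2] with s hs
        using S.ft'_eq_of_mem_Icc _ ⟨h1.trans hs.1.le, hs.2.le⟩
    · have := S.ft_nonneg hκ ⟨hr.1.le, h2.le⟩
      simp only [radialPotential, h2.not_gt, false_and, if_false, sub_zero]
      positivity
  · subst h2
    refine ⟨_, S.hasDerivWithinAt_ft'_rpow_beta, ?_⟩
    have h3 := S.ft_nonneg hκ (right_mem_Icc.2 hr.1.le)
    have h4 : 0 ≤ 1 / 2 * S.a * S.mu ^ (1 - 3 * S.beta) := by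
      have := S.ha
      have := Real.rpow_nonneg S.hmu.1.le (1 - 3 * S.beta)
      positivity
    simp only [radialPotential, lt_irrefl, false_and, if_false, sub_zero]
    nlinarith [mul_nonneg h4 h3, mul_nonneg hw h3]
  · refine ⟨_, (S.hft_ode _ r h2).hasDerivWithinAt, ?_⟩
    have : S.w (r / S.mu) = 0 := S.hw_supp _ ((one_lt_div S.hmu.1).2 (hb.trans h2))
    simp only [radialPotential, h2, hr.2, and_self, if_true, this]
    apply le_of_eq
    ring

end TangentScattering

/-- Integration in polar coordinates: a function whose weighted integral along every ray is
non-negative has non-negative integral. -/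
lemma integral_nonneg_of_forall_ray {E : Type*} [NormedAddCommGroup E] [NormedSpace ℝ E]
    [Nontrivial E] [FiniteDimensional ℝ E] [MeasurableSpace E] [BorelSpace E] (μ : Measure E)
    [μ.IsAddHaarMeasure] {F : E → ℝ}
    (hF : ∀ ω : E, ‖ω‖ = 1 →
      0 ≤ ∫ r in Ioi (0 : ℝ), r ^ (Module.finrank ℝ E - 1) * F (r • ω)) :
    0 ≤ ∫ x, F x ∂μ := by
  by_cases hint : Integrable F μ
  swap
  · rw [integral_undef hint]
  have hpres := μ.measurePreserving_homeomorphUnitSphereProd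
  set G : Metric.sphere (0 : E) 1 × Ioi (0 : ℝ) → ℝ := fun p => F (p.2.1 • p.1.1) with hG
  have hcomp : G ∘ homeomorphUnitSphereProd E = F ∘ Subtype.val := by
    ext x
    simp only [hG, Function.comp_apply]
    congr 1
    exact congrArg Subtype.val ((homeomorphUnitSphereProd E).symm_apply_apply x)
  have hFint : Integrable (F ∘ Subtype.val) (μ.comap (Subtype.val : ({0}ᶜ : Set E) → E)) := by
    rw [← integrableOn_iff_comap_subtypeVal (measurableSet_singleton _).compl]
    exact hint.integrableOn
  have hGint : Integrable G (μ.toSphere.prod (.volumeIoiPow (Module.finrank ℝ E - 1))) := by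
    rw [← hpres.integrable_comp_emb (Homeomorph.measurableEmbedding _), hcomp]
    exact hFint
  have heq : ∫ x, F x ∂μ = ∫ p, G p ∂μ.toSphere.prod (.volumeIoiPow (Module.finrank ℝ E - 1)) := by
    rw [← hpres.integral_comp (Homeomorph.measurableEmbedding _)]
    change _ = ∫ x, (G ∘ homeomorphUnitSphereProd E) x ∂_
    rw [hcomp]
    change _ = ∫ x : ({0}ᶜ : Set E), F x.1 ∂_
    rw [integral_subtype_comap (measurableSet_singleton _).compl F, restrict_compl_singleton]
  rw [heq, integral_prod _ hGint]
  refine integral_nonneg fun ω => ?_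
  have hω : ‖ω.1‖ = 1 := by simp
  refine (hF ω.1 hω).trans_eq ?_
  simp only [Measure.volumeIoiPow, ENNReal.ofReal]
  rw [integral_withDensity_eq_integral_smul
    ((measurable_subtype_coe.pow_const _).real_toNNReal)]
  change _ = ∫ a : Ioi (0 : ℝ), (fun r : ℝ =>
    (r ^ (Module.finrank ℝ E - 1)).toNNReal • F (r • ω.1)) a.1 ∂_
  rw [integral_subtype_comap measurableSet_Ioi fun r : ℝ =>
    (r ^ (Module.finrank ℝ E - 1)).toNNReal • F (r • ω.1)]
  refine setIntegral_congr_fun measurableSet_Ioi fun r hr => ?_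
  simp only [NNReal.smul_def, smul_eq_mul]
  rw [Real.coe_toNNReal _ (pow_nonneg (le_of_lt hr) _)]

/-- The derivative in a unit direction is dominated by the full gradient. -/
lemma norm_sq_apply_le_sum_single {n : ℕ} (L : EuclideanSpace ℝ (Fin n) →L[ℝ] ℂ)
    {ω : EuclideanSpace ℝ (Fin n)} (hω : ‖ω‖ = 1) :
    ‖L ω‖ ^ 2 ≤ ∑ i, ‖L (EuclideanSpace.single i (1 : ℝ))‖ ^ 2 := by
  have hsum : ω = ∑ i, ω i • EuclideanSpace.single i (1 : ℝ) := by
    have := (EuclideanSpace.basisFun (Fin n) ℝ).sum_repr ω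
    simpa using this.symm
  have hnorm : ∑ i, ‖ω i‖ ^ 2 = 1 := by rw [← EuclideanSpace.norm_sq_eq, hω]; norm_num
  calc ‖L ω‖ ^ 2 = ‖∑ i, ω i • L (EuclideanSpace.single i (1 : ℝ))‖ ^ 2 := by
        conv_lhs => rw [hsum, map_sum]
        simp only [map_smul]
    _ ≤ (∑ i, ‖ω i‖ * ‖L (EuclideanSpace.single i (1 : ℝ))‖) ^ 2 := by
        gcongr
        refine (norm_sum_le _ _).trans_eq ?_
        simp only [norm_smul]
    _ ≤ (∑ i, ‖ω i‖ ^ 2) * ∑ i, ‖L (EuclideanSpace.single i (1 : ℝ))‖ ^ 2 :=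
        Finset.sum_mul_sq_le_sq_mul_sq _ _ _
    _ = _ := by rw [hnorm, one_mul]

namespace TangentScattering

variable (S : TangentScattering)

/-- Positivity of the quadratic form for a single particle in the field of a scatterer. -/
lemma integral_energy_nonneg (hμ : S.a * S.mu ^ (1 - S.beta) ≤ 1 / 20)
    {φ : EuclideanSpace ℝ (Fin 3) → ℂ}
    {φ' : EuclideanSpace ℝ (Fin 3) → EuclideanSpace ℝ (Fin 3) →L[ℝ] ℂ}
    (hφ : ∀ y, HasFDerivAt φ (φ' y) y) :
    0 ≤ ∫ y, ({y | ‖y‖ < S.Rb}.indicator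
        (fun y => ∑ i : Fin 3, ‖φ' y (EuclideanSpace.single i (1 : ℝ))‖ ^ 2) y +
      1 / 2 * ((S.wmu3 y - S.Ub y) * ‖φ y‖ ^ 2)) := by
  refine integral_nonneg_of_forall_ray volume fun ω hω => ?_
  obtain ⟨c, hc, hfc⟩ := S.exists_pos_mul_le_ft hμ
  have hR := S.Rb_pos
  set Φ : ℝ → ℝ := fun r => r ^ (Module.finrank ℝ (EuclideanSpace ℝ (Fin 3)) - 1) *
    ({y | ‖y‖ < S.Rb}.indicator
        (fun y => ∑ i : Fin 3, ‖φ' y (EuclideanSpace.single i (1 : ℝ))‖ ^ 2) (r • ω) +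
      1 / 2 * ((S.wmu3 (r • ω) - S.Ub (r • ω)) * ‖φ (r • ω)‖ ^ 2)) with hΦ
  change 0 ≤ ∫ r in Ioi (0 : ℝ), Φ r
  by_cases hint : IntegrableOn Φ (Ioi 0)
  swap
  · rw [integral_undef hint]
  have hnorm : ∀ r : ℝ, 0 ≤ r → ‖r • ω‖ = r := fun r hr => by
    rw [norm_smul, hω, mul_one, Real.norm_of_nonneg hr]
  rw [← Ioc_union_Ioi_eq_Ioi hR.le, setIntegral_union Ioc_disjoint_Ioi_same measurableSet_Ioi
    (hint.mono_set Ioc_subset_Ioi_self) (hint.mono_set (Ioi_subset_Ioi hR.le))]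
  refine add_nonneg ?_ (setIntegral_nonneg measurableSet_Ioi fun r hr => ?_)
  · rw [← intervalIntegral.integral_of_le hR.le]
    choose! D hD using fun r => S.exists_hasDerivWithinAt_ft'_le (r := r)
    refine integral_radial_energy_nonneg (u := fun r => φ (r • ω)) (u' := fun r => φ' (r • ω) ω)
      hR hc (S.hft_deriv S.kappa) hfc (S.continuousOn_ft' _ S.hRb) (fun r hr => (hD r hr).1)
      (fun r hr => (hD r hr).2) S.htan_val S.htan_der (fun r => ?_) ?_ fun r hr => ?_
    · have h : HasDerivAt (fun r : ℝ => r • ω) ω r := by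
        simpa using (hasDerivAt_id r).smul_const ω
      exact (hφ (r • ω)).comp_hasDerivAt r h
    · rw [integrableOn_Icc_iff_integrableOn_Ioc]
      exact hint.mono_set Ioc_subset_Ioi_self
    · have hmem : r • ω ∈ {y : EuclideanSpace ℝ (Fin 3) | ‖y‖ < S.Rb} := by
        rw [mem_ofPred_eq, hnorm r hr.1.le]; exact hr.2
      simp only [hΦ, finrank_euclideanSpace_fin, Nat.add_one_sub_one, wmu3_sub_Ub,
        hnorm r hr.1.le, indicator_of_mem hmem]
      have h := norm_sq_apply_le_sum_single (φ' (r • ω)) hω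
      norm_num only
      rw [← mul_assoc]
      gcongr
  · have hr' : S.Rb < r := hr
    have hr0 : 0 ≤ r := (hR.trans hr').le
    have hU : S.Ub (r • ω) = 0 := by simp [Ub, hnorm r hr0, hr'.not_gt]
    have hw : 0 ≤ S.wmu3 (r • ω) := mul_nonneg (sq_nonneg _) (S.hw_nonneg _)
    have hi : 0 ≤ {y | ‖y‖ < S.Rb}.indicator
        (fun y => ∑ i : Fin 3, ‖φ' y (EuclideanSpace.single i (1 : ℝ))‖ ^ 2) (r • ω) :=
      indicator_nonneg (fun y _ => by positivity) _
    simp only [hΦ, hU, sub_zero]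
    positivity

lemma aestronglyMeasurable_wmu3_sub_Ub (hμ : S.a * S.mu ^ (1 - S.beta) ≤ 1 / 20) :
    AEStronglyMeasurable (fun z => S.wmu3 z - S.Ub z) volume := by
  obtain ⟨c, hc, hfc⟩ := S.exists_pos_mul_le_ft hμ
  have hmuR : S.mu < S.Rb := S.mu_lt_rpow_beta.trans S.hRb
  refine AEStronglyMeasurable.sub ?_ (Measurable.aestronglyMeasurable ?_)
  · have hg : Measurable ((Ioo 0 S.mu).indicator
        fun r => 2 * deriv (S.ft' S.kappa) r / S.ft S.kappa r) :=
      (((measurable_deriv _).const_mul 2).div (S.continuous_ft _).measurable).indicator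
        measurableSet_Ioo
    refine ⟨_, (hg.comp measurable_norm).stronglyMeasurable, ?_⟩
    have h0 : ∀ᵐ z : EuclideanSpace ℝ (Fin 3), z ∉ Metric.sphere 0 0 :=
      measure_eq_zero_iff_ae_notMem.1 (Measure.addHaar_sphere _ _ _)
    have h1 : ∀ᵐ z : EuclideanSpace ℝ (Fin 3), z ∉ Metric.sphere 0 S.mu :=
      measure_eq_zero_iff_ae_notMem.1 (Measure.addHaar_sphere _ _ _)
    filter_upwards [h0, h1] with z hz0 hz1
    rw [mem_sphere_zero_iff_norm] at hz0 hz1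
    have hz : 0 < ‖z‖ := lt_of_le_of_ne (norm_nonneg z) (Ne.symm hz0)
    rcases lt_or_gt_of_ne hz1 with h | h
    · have hf : 0 < S.ft S.kappa ‖z‖ :=
        (mul_pos hc hz).trans_le (hfc _ ⟨hz.le, (h.trans hmuR).le⟩)
      have hmem : ‖z‖ ∈ Ioo 0 S.mu := ⟨hz, h⟩
      rw [Function.comp_apply, indicator_of_mem hmem,
        (S.hasDerivAt_ft'_of_mem_Ioo S.kappa ⟨hz, h⟩).deriv, ScatteringODE.wmu3]
      field_simp
    · rw [Function.comp_apply, indicator_of_notMem (fun hm => h.not_gt hm.2), ScatteringODE.wmu3,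
        S.hw_supp _ ((one_lt_div S.hmu.1).2 h), mul_zero]
  · refine Measurable.ite ?_ measurable_const measurable_const
    exact (measurableSet_lt measurable_const measurable_norm).inter
      (measurableSet_lt measurable_norm measurable_const)

lemma exists_norm_wmu3_sub_Ub_le : ∃ C, ∀ z, ‖S.wmu3 z - S.Ub z‖ ≤ C := by
  obtain ⟨M, hM⟩ := S.hw_bdd
  refine ⟨S.mu⁻¹ ^ 2 * M + ‖S.a * S.mu ^ (1 - 3 * S.beta)‖, fun z => ?_⟩
  refine (norm_sub_le _ _).trans (add_le_add ?_ ?_)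
  · rw [ScatteringODE.wmu3, Real.norm_of_nonneg (mul_nonneg (sq_nonneg _) (S.hw_nonneg _))]
    gcongr
    exact hM _
  · rw [Ub]
    split_ifs
    · exact le_rfl
    · rw [norm_zero]
      exact norm_nonneg _

end TangentScattering

/-- Fixing all particles but the first and centring the first one at the second. -/
lemma integral_piFin_eq_integral_integral_translate {E : Type*} [NormedAddCommGroup E]
    [MeasureSpace E] [BorelSpace E] [SecondCountableTopology E] [SigmaFinite (volume : Measure E)]
    [(volume : Measure E).IsAddRightInvariant] {n : ℕ}
    {F : (Fin (n + 2) → E) → ℝ} (hF : Integrable F) :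
    ∫ z, F z = ∫ y : Fin (n + 1) → E, ∫ x : E,
      F (Pi.single 0 x + Fin.insertNth 0 (y 0) y) := by
  have hpres := (volume_preserving_piFinSuccAbove (fun _ : Fin (n + 2) => E) 0).symm
  have hint := (hpres.integrable_comp_emb (MeasurableEquiv.measurableEmbedding _)).2 hF
  rw [← hpres.integral_comp (MeasurableEquiv.measurableEmbedding _) F]
  refine (integral_prod_symm _ hint).trans (integral_congr_ae (.of_forall fun y => ?_))
  refine (integral_add_right_eq_self _ (y 0)).symm.trans
    (integral_congr_ae (.of_forall fun x => ?_))
  refine congrArg F (funext fun i => ?_)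
  induction i using Fin.cases with
  | zero => simp [MeasurableEquiv.piFinSuccAbove, Fin.insertNthEquiv]
  | succ i => simp [MeasurableEquiv.piFinSuccAbove, Fin.insertNthEquiv]

lemma quasiMeasurePreserving_sub_piFin {E : Type*} [NormedAddCommGroup E]
    [MeasureSpace E] [BorelSpace E] [SecondCountableTopology E] [SigmaFinite (volume : Measure E)]
    [(volume : Measure E).IsAddRightInvariant] (n : ℕ) :
    Measure.QuasiMeasurePreserving (fun z : Fin (n + 2) → E => z 0 - z 1) := by
  have hpres := volume_preserving_piFinSuccAbove (fun _ : Fin (n + 2) => E) 0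
  have h : Measure.QuasiMeasurePreserving (fun p : E × (Fin (n + 1) → E) => p.1 - p.2 0) := by
    refine QuasiMeasurePreserving.prod_of_left (by fun_prop) (.of_forall fun y => ?_)
    exact (measurePreserving_sub_right volume (y 0)).quasiMeasurePreserving
  exact h.comp hpres.quasiMeasurePreserving

lemma integrable_norm_sq_of_hasCompactSupport {X : Type*} [TopologicalSpace X]
    [MeasurableSpace X] [OpensMeasurableSpace X] {ν : Measure X} [IsFiniteMeasureOnCompacts ν]
    {g : X → ℂ} (hg : Continuous g) (hgc : HasCompactSupport g) :
    Integrable (fun z => ‖g z‖ ^ 2) ν := by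
  have hc : Continuous fun z => ‖g z‖ ^ 2 := by fun_prop
  have hs : HasCompactSupport fun z => ‖g z‖ ^ 2 := by
    refine hgc.mono fun z hz hgz => hz ?_
    simp [hgz]
  exact hc.integrable_of_hasCompactSupport hs

lemma integrable_norm_fderiv_apply_sq {E : Type*} [NormedAddCommGroup E] [NormedSpace ℝ E]
    [MeasurableSpace E] [OpensMeasurableSpace E] {ν : Measure E} [IsFiniteMeasureOnCompacts ν]
    {ψ : E → ℂ} (hψ : ContDiff ℝ 1 ψ) (hψc : HasCompactSupport ψ) (v : E) :
    Integrable (fun z => ‖fderiv ℝ ψ z v‖ ^ 2) ν := by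
  have hc : Continuous fun z => fderiv ℝ ψ z v :=
    (hψ.continuous_fderiv one_ne_zero).clm_apply continuous_const
  have hs : HasCompactSupport fun z => fderiv ℝ ψ z v := hψc.fderiv_apply (𝕜 := ℝ) v
  exact integrable_norm_sq_of_hasCompactSupport hc hs

/-- Quadratic-form positivity: for every `N ≥ 2` and every smooth compactly supported `ψ` on
`(ℝ³)^N`, `∫ 1_{|z₁-z₂| < R_β} |∇_{z₁}ψ|² + ½ ∫ (w_μ - U_β)(z₁-z₂) |ψ|² ≥ 0`. -/
theorem quadratic_form_nonneg (a beta : ℝ) (ha : 0 < a)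
    (hbeta : beta ∈ Set.Ioo (1/3 : ℝ) 1) :
    ∃ μ₀ > (0:ℝ), ∀ S : TangentScattering, S.a = a → S.beta = beta → S.mu ≤ μ₀ →
      ∀ N : ℕ, ∀ hN : 2 ≤ N,
      ∀ ψ : (Fin N → EuclideanSpace ℝ (Fin 3)) → ℂ, ContDiff ℝ (⊤ : ℕ∞) ψ → HasCompactSupport ψ →
        0 ≤ (∫ z in {z : Fin N → EuclideanSpace ℝ (Fin 3) |
              ‖z ⟨0, by omega⟩ - z ⟨1, by omega⟩‖ < S.Rb},
              ∑ i : Fin 3,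
                ‖fderiv ℝ ψ z (Pi.single (⟨0, by omega⟩ : Fin N)
                  (EuclideanSpace.single i (1:ℝ)))‖ ^ 2) +
            (1/2) * ∫ z : Fin N → EuclideanSpace ℝ (Fin 3),
              (S.wmu3 (z ⟨0, by omega⟩ - z ⟨1, by omega⟩) -
                S.Ub (z ⟨0, by omega⟩ - z ⟨1, by omega⟩)) * ‖ψ z‖ ^ 2 := by
  obtain ⟨_, hβ1⟩ := hbeta
  have h1β : 0 < 1 - beta := sub_pos.2 hβ1
  refine ⟨(1 / (20 * a)) ^ (1 - beta)⁻¹, Real.rpow_pos_of_pos (by positivity) _, ?_⟩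
  rintro S rfl rfl hSμ N hN ψ hψ hψc
  have hμ : S.a * S.mu ^ (1 - S.beta) ≤ 1 / 20 := by
    have h := Real.rpow_le_rpow S.hmu.1.le hSμ h1β.le
    rw [Real.rpow_inv_rpow (by positivity) h1β.ne'] at h
    calc S.a * S.mu ^ (1 - S.beta) ≤ S.a * (1 / (20 * S.a)) := by gcongr
      _ = 1 / 20 := by field_simp
  obtain ⟨n, rfl⟩ : ∃ n, N = n + 2 := ⟨N - 2, by omega⟩
  change 0 ≤ (∫ z in {z : Fin (n + 2) → EuclideanSpace ℝ (Fin 3) | ‖z 0 - z 1‖ < S.Rb},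
      ∑ i : Fin 3, ‖fderiv ℝ ψ z (Pi.single 0 (EuclideanSpace.single i (1:ℝ)))‖ ^ 2) +
    (1/2) * ∫ z : Fin (n + 2) → EuclideanSpace ℝ (Fin 3),
      (S.wmu3 (z 0 - z 1) - S.Ub (z 0 - z 1)) * ‖ψ z‖ ^ 2
  have hset : MeasurableSet {z : Fin (n + 2) → EuclideanSpace ℝ (Fin 3) | ‖z 0 - z 1‖ < S.Rb} :=
    measurableSet_lt (by fun_prop) measurable_const
  have hkin : Integrable fun z : Fin (n + 2) → EuclideanSpace ℝ (Fin 3) =>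
      ∑ i : Fin 3, ‖fderiv ℝ ψ z (Pi.single 0 (EuclideanSpace.single i (1:ℝ)))‖ ^ 2 := by
    exact integrable_finsetSum _ fun i _ =>
      integrable_norm_fderiv_apply_sq (hψ.of_le (by simp)) hψc _
  have hpot : Integrable fun z : Fin (n + 2) → EuclideanSpace ℝ (Fin 3) =>
      (S.wmu3 (z 0 - z 1) - S.Ub (z 0 - z 1)) * ‖ψ z‖ ^ 2 := by
    obtain ⟨C, hC⟩ := S.exists_norm_wmu3_sub_Ub_le
    have hψ2 : Integrable fun z => ‖ψ z‖ ^ 2 :=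
      integrable_norm_sq_of_hasCompactSupport hψ.continuous hψc
    have hV : AEStronglyMeasurable fun z : Fin (n + 2) → EuclideanSpace ℝ (Fin 3) =>
        S.wmu3 (z 0 - z 1) - S.Ub (z 0 - z 1) :=
      (S.aestronglyMeasurable_wmu3_sub_Ub hμ).comp_quasiMeasurePreserving
        (quasiMeasurePreserving_sub_piFin n)
    exact hψ2.bdd_mul hV (.of_forall fun z => hC _)
  rw [← integral_indicator hset, ← integral_const_mul,
    ← integral_add (hkin.indicator hset) (hpot.const_mul _)]
  rw [integral_piFin_eq_integral_integral_translate
    (show Integrable fun z : Fin (n + 2) → EuclideanSpace ℝ (Fin 3) => _ + _ from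
      (hkin.indicator hset).add (hpot.const_mul (1 / 2)))]
  refine integral_nonneg fun y => ?_
  set p : Fin (n + 2) → EuclideanSpace ℝ (Fin 3) := Fin.insertNth 0 (y 0) y
  have hp : ∀ x : EuclideanSpace ℝ (Fin 3), (Pi.single 0 x + p : Fin (n + 2) → _) 0 -
      (Pi.single 0 x + p : Fin (n + 2) → _) 1 = x := fun x => by
    have h1 : p 1 = y 0 := rfl
    have h0 : p 0 = y 0 := rfl
    simp [h0, h1]
  have hφ : ∀ x, HasFDerivAt (fun x => ψ (Pi.single 0 x + p))
      ((fderiv ℝ ψ (Pi.single 0 x + p)).comp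
        (ContinuousLinearMap.single ℝ (fun _ : Fin (n + 2) => EuclideanSpace ℝ (Fin 3)) 0)) x := by
    intro x
    exact ((hψ.differentiable (by simp)) _).hasFDerivAt.comp x
      ((ContinuousLinearMap.single ℝ (fun _ : Fin (n + 2) =>
        EuclideanSpace ℝ (Fin 3)) 0).hasFDerivAt.add_const p)
  refine (S.integral_energy_nonneg hμ hφ).trans_eq (integral_congr_ae (.of_forall fun x => ?_))
  simp only [indicator_apply, mem_ofPred_eq, hp, ContinuousLinearMap.comp_apply,
    ContinuousLinearMap.single_apply]
end

section
/- Let N ≥ 2 be an integer and ξ ∈ (0, 1/2), and define m : ℕ → ℝ by m(k) = √(k/N) if k ≥ N^{1−2ξ} and m(k) = ½( N^{−1+ξ} k + N^{−ξ} ) otherwise. Then for every k ∈ ℕ: |m(k) − m(k+1)| ≤ ½ N^{−1+ξ} and |m(k) − m(k+2)| ≤ N^{−1+ξ}; moreover there is a universal constant C such that |m(k) − 2 m(k+1) + m(k+2)| ≤ C N^{−2+3ξ} and |m(k) − m(k+1) − m(k+2) + m(k+3)| ≤ C N^{−2+3ξ}. -/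
/-- The weight function `m(k) = √(k/N)` for `k ≥ N^(1-2ξ)` and
`m(k) = ½(N^(-1+ξ) k + N^(-ξ))` otherwise. -/
noncomputable def mWeight (N : ℕ) (ξ : ℝ) (k : ℕ) : ℝ :=
  if (N : ℝ) ^ (1 - 2 * ξ) ≤ (k : ℝ) then Real.sqrt ((k : ℝ) / N)
  else (1/2) * ((N : ℝ) ^ (-1 + ξ) * k + (N : ℝ) ^ (-ξ))

/-- The minimiser of `c ↦ (x / c + c) / 2` over `c ≥ s`. -/
noncomputable def cutoffSqrt (s x : ℝ) : ℝ := max s (Real.sqrt x)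

/-- The minimum of `(x / c + c) / 2` over `c ≥ s`: it equals `√x` for `x ≥ s ^ 2` and the tangent
line to `√` at `s ^ 2` below. -/
noncomputable def tangentSqrt (s x : ℝ) : ℝ := (x / cutoffSqrt s x + cutoffSqrt s x) / 2

section TangentSqrt

variable {s x y : ℝ}

lemma le_cutoffSqrt : s ≤ cutoffSqrt s x := le_max_left _ _

lemma cutoffSqrt_pos (hs : 0 < s) : 0 < cutoffSqrt s x := hs.trans_le le_cutoffSqrt

lemma cutoffSqrt_mono (h : x ≤ y) : cutoffSqrt s x ≤ cutoffSqrt s y :=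
  max_le_max le_rfl (Real.sqrt_le_sqrt h)

lemma cutoffSqrt_sq (hs : 0 < s) (hx : 0 ≤ x) : cutoffSqrt s x ^ 2 = max (s ^ 2) x := by
  unfold cutoffSqrt
  rcases le_total s (Real.sqrt x) with h | h
  · rw [max_eq_right h, Real.sq_sqrt hx, max_eq_right ((Real.le_sqrt' hs).1 h)]
  · rw [max_eq_left h, max_eq_left ((Real.sqrt_le_left hs.le).1 h)]

lemma tangentSqrt_of_sq_le (h : s ^ 2 ≤ x) : tangentSqrt s x = Real.sqrt x := by
  rw [tangentSqrt, cutoffSqrt, max_eq_right (Real.le_sqrt_of_sq_le h), Real.div_sqrt]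
  ring

lemma tangentSqrt_of_lt_sq (hs : 0 < s) (h : x < s ^ 2) : tangentSqrt s x = (x / s + s) / 2 := by
  rw [tangentSqrt, cutoffSqrt, max_eq_left ((Real.sqrt_le_left hs.le).2 h.le)]

lemma tangentSqrt_le (hs : 0 < s) (hx : 0 ≤ x) {c : ℝ} (hc : s ≤ c) :
    tangentSqrt s x ≤ (x / c + c) / 2 := by
  have hc0 : 0 < c := hs.trans_le hc
  have hh : 0 < cutoffSqrt s x := cutoffSqrt_pos hs
  have key : (x / c + c) - (x / cutoffSqrt s x + cutoffSqrt s x)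
      = (c - cutoffSqrt s x) * (c * cutoffSqrt s x - x) / (c * cutoffSqrt s x) := by
    field_simp
    ring
  have hnn : 0 ≤ (c - cutoffSqrt s x) * (c * cutoffSqrt s x - x) := by
    have hsq := cutoffSqrt_sq hs hx
    rcases le_total (cutoffSqrt s x) c with h | h
    · have : x ≤ cutoffSqrt s x ^ 2 := hsq ▸ le_max_right _ _
      exact mul_nonneg (sub_nonneg.2 h) (by nlinarith)
    · rcases le_total (s ^ 2) x with h' | h'
      · rw [max_eq_right h'] at hsq
        exact mul_nonneg_of_nonpos_of_nonpos (sub_nonpos.2 h) (by nlinarith)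
      · rw [max_eq_left h'] at hsq
        have : cutoffSqrt s x = s := (pow_left_inj₀ hh.le hs.le two_ne_zero).1 hsq
        rw [show c = cutoffSqrt s x by linarith]
        simp
  have := div_nonneg hnn (mul_pos hc0 hh).le
  rw [tangentSqrt]
  linarith

lemma tangentSqrt_sub_le (hs : 0 < s) (hy : 0 ≤ y) :
    tangentSqrt s y - tangentSqrt s x ≤ (y - x) / (2 * cutoffSqrt s x) := by
  have h := tangentSqrt_le hs hy (le_cutoffSqrt (s := s) (x := x))
  have hh : 0 < cutoffSqrt s x := cutoffSqrt_pos hs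
  have : (y - x) / (2 * cutoffSqrt s x) = (y / cutoffSqrt s x + cutoffSqrt s x) / 2
      - (x / cutoffSqrt s x + cutoffSqrt s x) / 2 := by
    field_simp
    ring
  rw [this]
  exact sub_le_sub_right h _

lemma le_tangentSqrt_sub (hs : 0 < s) (hx : 0 ≤ x) :
    (y - x) / (2 * cutoffSqrt s y) ≤ tangentSqrt s y - tangentSqrt s x := by
  have h := tangentSqrt_sub_le (x := y) hs hx
  rw [← neg_sub y x, neg_div] at h
  linarith

lemma abs_tangentSqrt_sub_le (hs : 0 < s) (hx : 0 ≤ x) :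
    |tangentSqrt s x - tangentSqrt s (x + 1)| ≤ 1 / (2 * s) := by
  have h₁ := tangentSqrt_sub_le (x := x) (y := x + 1) hs (by linarith)
  have h₂ := le_tangentSqrt_sub (y := x + 1) hs hx
  rw [add_sub_cancel_left] at h₁ h₂
  have h₃ : 1 / (2 * cutoffSqrt s x) ≤ 1 / (2 * s) := by
    gcongr
    exact le_cutoffSqrt
  have h₄ : 0 < 1 / (2 * cutoffSqrt s (x + 1)) := by
    have := cutoffSqrt_pos (x := x + 1) hs
    positivity
  rw [abs_le]
  constructor <;> linarith

lemma inv_cutoffSqrt_sub_le (hs : 0 < s) (hx : 0 ≤ x) :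
    1 / (2 * cutoffSqrt s x) - 1 / (2 * cutoffSqrt s (x + 2)) ≤ 1 / (2 * s ^ 3) := by
  have ha := le_cutoffSqrt (s := s) (x := x)
  have hb := le_cutoffSqrt (s := s) (x := x + 2)
  have hab : cutoffSqrt s x ≤ cutoffSqrt s (x + 2) := cutoffSqrt_mono (by linarith)
  have hsq : cutoffSqrt s (x + 2) ^ 2 ≤ cutoffSqrt s x ^ 2 + 2 := by
    rw [cutoffSqrt_sq hs hx, cutoffSqrt_sq hs (by linarith)]
    refine max_le ?_ ?_
    · linarith [le_max_left (s ^ 2) x]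
    · linarith [le_max_right (s ^ 2) x]
  generalize cutoffSqrt s x = a at *
  generalize cutoffSqrt s (x + 2) = b at *
  have ha0 : 0 < a := hs.trans_le ha
  have hb0 : 0 < b := hs.trans_le hb
  have hdiff : (b - a) * s ≤ 1 := by nlinarith
  have hmul : s * s ≤ a * b := mul_le_mul ha hb hs.le ha0.le
  have : 1 / (2 * a) - 1 / (2 * b) = (b - a) / (2 * (a * b)) := by
    field_simp
  rw [this, div_le_div_iff₀ (by positivity) (by positivity)]
  calc (b - a) * (2 * s ^ 3) = 2 * ((b - a) * s * (s * s)) := by ring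
    _ ≤ 2 * (1 * (a * b)) := by gcongr
    _ = 1 * (2 * (a * b)) := by ring

lemma abs_tangentSqrt_second_diff_le (hs : 0 < s) (hx : 0 ≤ x) :
    |tangentSqrt s x - 2 * tangentSqrt s (x + 1) + tangentSqrt s (x + 2)| ≤ 1 / (2 * s ^ 3) := by
  have h₁ := tangentSqrt_sub_le (x := x) (y := x + 1) hs (by linarith)
  have h₂ := le_tangentSqrt_sub (y := x + 1) hs hx
  have h₃ := tangentSqrt_sub_le (x := x + 1) (y := x + 2) hs (by linarith)
  have h₄ := le_tangentSqrt_sub (x := x + 1) (y := x + 2) hs (by linarith)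
  have h₅ := inv_cutoffSqrt_sub_le hs hx
  have h₆ : 0 < 1 / (2 * s ^ 3) := by positivity
  rw [add_sub_cancel_left] at h₁ h₂
  rw [show x + 2 - (x + 1) = 1 by ring] at h₃ h₄
  rw [abs_le]
  constructor <;> linarith

end TangentSqrt

lemma mWeight_eq_tangentSqrt {N : ℕ} (hN : 0 < N) (ξ : ℝ) (k : ℕ) :
    mWeight N ξ k = (N : ℝ) ^ (-(1 / 2) : ℝ) * tangentSqrt ((N : ℝ) ^ (1 / 2 - ξ)) k := by
  have hN0 : (0 : ℝ) < N := by exact_mod_cast hN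
  have hs : 0 < (N : ℝ) ^ (1 / 2 - ξ) := Real.rpow_pos_of_pos hN0 _
  have hsq : ((N : ℝ) ^ (1 / 2 - ξ)) ^ 2 = (N : ℝ) ^ (1 - 2 * ξ) := by
    rw [← Real.rpow_mul_natCast hN0.le]
    congr 1
    push_cast
    ring
  unfold mWeight
  split_ifs with h
  · rw [tangentSqrt_of_sq_le (hsq ▸ h), Real.sqrt_div' _ hN0.le, Real.rpow_neg hN0.le,
      ← Real.sqrt_eq_rpow, div_eq_inv_mul]
  · rw [tangentSqrt_of_lt_sq hs (hsq ▸ not_le.1 h), div_eq_mul_inv (k : ℝ),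
      ← Real.rpow_neg hN0.le,
      show (-1 + ξ : ℝ) = -(1 / 2) + -(1 / 2 - ξ) by ring, Real.rpow_add hN0,
      show (-ξ : ℝ) = -(1 / 2) + (1 / 2 - ξ) by ring, Real.rpow_add hN0]
    ring

/-- Bounds on the discrete derivatives of the weight `m`: for all `k`,
`|m(k) - m(k+1)| ≤ ½ N^(-1+ξ)` and `|m(k) - m(k+2)| ≤ N^(-1+ξ)`, and there is a universal
constant `C` such that the second discrete derivatives are bounded by `C N^(-2+3ξ)`. -/
theorem mWeight_discrete_derivative_bounds :
    ∃ C > (0:ℝ), ∀ N : ℕ, 2 ≤ N → ∀ ξ : ℝ, ξ ∈ Set.Ioo (0:ℝ) (1/2) →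
      (∀ k : ℕ, |mWeight N ξ k - mWeight N ξ (k+1)| ≤ (1/2) * (N : ℝ) ^ (-1 + ξ)) ∧
      (∀ k : ℕ, |mWeight N ξ k - mWeight N ξ (k+2)| ≤ (N : ℝ) ^ (-1 + ξ)) ∧
      (∀ k : ℕ, |mWeight N ξ k - 2 * mWeight N ξ (k+1) + mWeight N ξ (k+2)| ≤
        C * (N : ℝ) ^ (-2 + 3 * ξ)) ∧
      (∀ k : ℕ, |mWeight N ξ k - mWeight N ξ (k+1) - mWeight N ξ (k+2) + mWeight N ξ (k+3)| ≤
        C * (N : ℝ) ^ (-2 + 3 * ξ)) := by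
  refine ⟨1, one_pos, fun N hN ξ _ => ?_⟩
  have hN0 : (0 : ℝ) < N := by exact_mod_cast (by omega : 0 < N)
  have hm := mWeight_eq_tangentSqrt (by omega : 0 < N) ξ
  have hr : 0 < (N : ℝ) ^ (-(1 / 2) : ℝ) := Real.rpow_pos_of_pos hN0 _
  have hs : 0 < (N : ℝ) ^ (1 / 2 - ξ) := Real.rpow_pos_of_pos hN0 _
  have first_order : (N : ℝ) ^ (-(1 / 2) : ℝ) * (1 / (2 * (N : ℝ) ^ (1 / 2 - ξ)))
      = 1 / 2 * (N : ℝ) ^ (-1 + ξ) := by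
    rw [show (-1 + ξ : ℝ) = -(1 / 2) - (1 / 2 - ξ) by ring, Real.rpow_sub hN0 (-(1 / 2))]
    ring
  have second_order : (N : ℝ) ^ (-(1 / 2) : ℝ) * (1 / (2 * ((N : ℝ) ^ (1 / 2 - ξ)) ^ 3))
      = 1 / 2 * (N : ℝ) ^ (-2 + 3 * ξ) := by
    rw [show (-2 + 3 * ξ : ℝ) = -(1 / 2) - (1 / 2 - ξ) * (3 : ℕ) by push_cast; ring,
      Real.rpow_sub hN0 (-(1 / 2)), Real.rpow_mul_natCast hN0.le]
    ring
  have diff_one (k : ℕ) :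
      |mWeight N ξ k - mWeight N ξ (k + 1)| ≤ 1 / 2 * (N : ℝ) ^ (-1 + ξ) := by
    rw [hm, hm, ← mul_sub, abs_mul, abs_of_pos hr, ← first_order]
    push_cast
    exact mul_le_mul_of_nonneg_left (abs_tangentSqrt_sub_le hs k.cast_nonneg) hr.le
  have second_diff (k : ℕ) : |mWeight N ξ k - 2 * mWeight N ξ (k + 1) + mWeight N ξ (k + 2)|
      ≤ 1 / 2 * (N : ℝ) ^ (-2 + 3 * ξ) := by
    rw [hm, hm, hm, mul_left_comm, ← mul_sub, ← mul_add, abs_mul, abs_of_pos hr, ← second_order]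
    push_cast
    exact mul_le_mul_of_nonneg_left (abs_tangentSqrt_second_diff_le hs k.cast_nonneg) hr.le
  refine ⟨diff_one, fun k => ?_, fun k => ?_, fun k => ?_⟩
  · have h₁ := abs_le.1 (diff_one k)
    have h₂ := abs_le.1 (diff_one (k + 1))
    rw [abs_le]
    constructor <;> linarith [h₁.1, h₁.2, h₂.1, h₂.2]
  · have := Real.rpow_pos_of_pos hN0 (-2 + 3 * ξ)
    linarith [second_diff k]
  · have h₁ := abs_le.1 (second_diff k)
    have h₂ := abs_le.1 (second_diff (k + 1))
    rw [abs_le]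
    constructor <;> linarith [h₁.1, h₁.2, h₂.1, h₂.2]
end
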